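/- There exists a constant c' > 0 such that the following holds for all integers n ≥ 2. Let r = ⌈n^{1/3}⌉ and let M be a positive integer such that every red/blue coloring of the edges of the complete graph K_M contains a red clique K_r or a blue clique K_n, and suppose M ≤ n^r. Then for every N ≥ 2^{c'·n^{2/3}·log n}, every red/blue edge-coloring of the rectangular grid graph Γ_{N,M} contains a red rectangle or a blue K_n. -/

import Mathlib

/-- Adjacency in the grid graph `K_m □ K_n`. -/
def GridAdj {m n : ℕ} (p q : Fin m × Fin n) : Prop :=
  (p.1 = q.1 ∧ p.2 ≠ q.2) ∨ (p.1 ≠ q.1 ∧ p.2 = q.2)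

/-- A red `K_r` in an edge-coloring of `K_M` (red = `true`). -/
def HasRedClique (M r : ℕ) (χ : Sym2 (Fin M) → Bool) : Prop :=
  ∃ S : Finset (Fin M), S.card = r ∧ ∀ a ∈ S, ∀ b ∈ S, a ≠ b → χ s(a, b) = true

/-- A blue `K_n` in an edge-coloring of `K_M` (blue = `false`). -/
def HasBlueClique (M n : ℕ) (χ : Sym2 (Fin M) → Bool) : Prop :=
  ∃ S : Finset (Fin M), S.card = n ∧ ∀ a ∈ S, ∀ b ∈ S, a ≠ b → χ s(a, b) = false

/-- A red rectangle in an edge-coloring of `Γ_{N,M}` (red = `true`). -/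
def HasRedRect (N M : ℕ) (χ : Sym2 (Fin N × Fin M) → Bool) : Prop :=
  ∃ x x' : Fin N, ∃ y y' : Fin M, x ≠ x' ∧ y ≠ y' ∧
    χ s((x, y), (x', y)) = true ∧ χ s((x, y'), (x', y')) = true ∧
    χ s((x, y), (x, y')) = true ∧ χ s((x', y), (x', y')) = true

/-- A blue `K_n` in an edge-coloring of `Γ_{N,M}` (blue = `false`). -/
def HasBlueGridClique (N M n : ℕ) (χ : Sym2 (Fin N × Fin M) → Bool) : Prop :=
  ∃ S : Finset (Fin N × Fin M), S.card = n ∧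
    ∀ p ∈ S, ∀ q ∈ S, p ≠ q → GridAdj p q ∧ χ s(p, q) = false

/-!
If a coloring has no blue `K_n`, every column contains a red `K_r`, so by pigeonhole some `r`-set
`S` of rows is a red clique in all columns of a set `C` that contains a `1 / (M choose r)` fraction
of the columns. Without red rectangles, the red graphs that the rows of `S` induce on `C` are
pairwise edge-disjoint. Hence one of them has edge density at most `1 / r`, and it has no
`n`-clique, since such a clique would be independent, that is blue, in another row of `S`.

An Erdős–Szemerédi argument shows that such a sparse graph is small. Discard the vertices of more
than twice the average degree and let `I` be a maximum independent set of the rest. All but a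
constant fraction of the remaining vertices have at most `t = O(n / r)` neighbors in `I`, so they
fall into at most `n ^ t` classes according to these neighbors. A class spans no independent set of
size `t + 1`, which could be exchanged for at most `t` vertices of `I`, so Ramsey's theorem bounds
its size by `n ^ (t + 1)`.
-/

open Finset SimpleGraph

section Counting

theorem card_powerset_filter_card_le {α : Type*} (I : Finset α) (t : ℕ) :
    #{T ∈ I.powerset | #T ≤ t} ≤ (#I + 1) ^ t := by
  classical
  have hsub : {T ∈ I.powerset | #T ≤ t} ⊆ (range (t + 1)).biUnion (I.powersetCard ·) := by
    intro T hT
    simpa [Nat.lt_succ_iff, and_comm] using hT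
  calc #{T ∈ I.powerset | #T ≤ t}
      ≤ ∑ k ∈ range (t + 1), #(I.powersetCard k) := (card_le_card hsub).trans card_biUnion_le
    _ ≤ ∑ k ∈ range (t + 1), #I ^ k * 1 ^ (t - k) * t.choose k := by
        refine sum_le_sum fun k hk => ?_
        rw [card_powersetCard, one_pow, mul_one]
        exact (Nat.choose_le_pow _ _).trans <|
          Nat.le_mul_of_pos_right _ <| Nat.choose_pos (mem_range_succ_iff.1 hk)
    _ = (#I + 1) ^ t := (add_pow _ _ _).symm

end Counting

section Graphs

variable {V : Type*} {G : SimpleGraph V} {n : ℕ}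

theorem indepSetFree_comap {W : Type*} (f : W ↪ V) (h : G.IndepSetFree n) :
    (G.comap f).IndepSetFree n := by
  rintro K ⟨hK, hKn⟩
  refine h (K.map f) ⟨?_, by rw [card_map, hKn]⟩
  simpa [IsIndepSet, Set.InjOn.pairwise_image f.injective.injOn] using hK

theorem cliqueFree_of_disjoint {H : SimpleGraph V} (hGH : Disjoint G H) (h : H.IndepSetFree n) :
    G.CliqueFree n :=
  (H.cliqueFree_compl.2 h).anti hGH.le_compl_right

theorem card_lt_of_isIndepSet [Finite V] (h : G.IndepSetFree n) {I : Finset V}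
    (hI : G.IsIndepSet (I : Set V)) : #I < n := by
  by_contra! hn
  obtain ⟨K, hKI, hK⟩ := exists_subset_card_eq hn
  exact h K ⟨hI.mono (coe_subset.2 hKI), hK⟩

theorem card_le_indepNum_mul_maxDegree_add_one [Fintype V] [DecidableRel G.Adj] :
    Fintype.card V ≤ G.indepNum * (G.maxDegree + 1) := by
  classical
  obtain ⟨I, hI⟩ := G.maximumIndepSet_exists
  have hdom : univ ⊆ I.biUnion fun u => insert u (G.neighborFinset u) := by
    intro v _
    by_contra! hv
    simp only [mem_biUnion, mem_insert, mem_neighborFinset, not_exists, not_and, not_or] at hv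
    have hvI : v ∉ I := fun h => (hv v h).1 rfl
    have hins : G.IsIndepSet (insert v I : Finset V) := by
      rw [coe_insert]
      exact hI.isIndepSet.insert fun u hu _ => ⟨fun h => (hv u hu).2 h.symm, (hv u hu).2⟩
    have := hI.maximum _ hins
    rw [card_insert_of_notMem hvI] at this
    omega
  rw [← maximumIndepSet_card_eq_indepNum I hI]
  refine (card_le_card hdom).trans (card_biUnion_le_card_mul _ _ _ fun u _ => ?_)
  calc #(insert u (G.neighborFinset u)) ≤ G.degree u + 1 := card_insert_le _ _
    _ ≤ G.maxDegree + 1 := Nat.succ_le_succ (G.degree_le_maxDegree u)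

theorem cliqueFree_induce_neighborSet {s : ℕ} (h : G.CliqueFree (s + 1)) (v : V) :
    (G.induce (G.neighborSet v)).CliqueFree s := by
  rw [cliqueFree_induce_iff]
  simpa using (h.cliqueFreeOn (s := Set.univ)).of_succ G (Set.mem_univ v)

/-- Neighborhoods in a `K_{s+1}`-free graph are `K_s`-free, so induction on `s` bounds the maximum
degree. -/
theorem card_lt_pow_of_cliqueFree_of_indepSetFree [Fintype V] {s : ℕ} (hK : G.CliqueFree s)
    (hI : G.IndepSetFree n) : Fintype.card V < n ^ s := by
  classical
  induction s generalizing V with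
  | zero => exact absurd hK G.not_cliqueFree_zero
  | succ s ih =>
    obtain ⟨I, hI'⟩ := G.exists_isNIndepSet_indepNum
    have hα : G.indepNum < n := hI'.card_eq ▸ card_lt_of_isIndepSet hI hI'.isIndepSet
    have hpos : 0 < n ^ s := Nat.pow_pos (Nat.zero_lt_of_lt hα)
    have hdeg : ∀ v, G.degree v < n ^ s := fun v => by
      rw [← card_neighborSet_eq_degree]
      exact ih (cliqueFree_induce_neighborSet hK v) (indepSetFree_comap (.subtype _) hI)
    have hΔ : G.maxDegree < n ^ s := (Nat.le_sub_one_iff_lt hpos).1 <|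
      G.maxDegree_le_of_forall_degree_le _ fun v => Nat.le_sub_one_of_lt (hdeg v)
    calc Fintype.card V ≤ G.indepNum * (G.maxDegree + 1) := card_le_indepNum_mul_maxDegree_add_one
      _ ≤ G.indepNum * n ^ s := Nat.mul_le_mul_left _ hΔ
      _ < n * n ^ s := Nat.mul_lt_mul_of_pos_right hα hpos
      _ = n ^ (s + 1) := (pow_succ' n s).symm

/-- Replacing `N(J) ∩ I` by `J` in `I` yields another independent set. -/
theorem card_le_card_filter_adj_of_isMaximumIndepSet [Finite V] [DecidableRel G.Adj]
    {I J : Finset V} (hI : G.IsMaximumIndepSet I) (hJ : G.IsIndepSet (J : Set V))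
    (hIJ : Disjoint I J) : #J ≤ #{u ∈ I | ∃ v ∈ J, G.Adj u v} := by
  classical
  set I' := {u ∈ I | ¬ ∃ v ∈ J, G.Adj u v}
  have hnot : ∀ u ∈ I', ∀ v ∈ J, ¬ G.Adj u v := fun u hu v hv h => (mem_filter.1 hu).2 ⟨v, hv, h⟩
  have hindep : G.IsIndepSet (I' ∪ J : Finset V) := by
    rw [coe_union, IsIndepSet, Set.pairwise_union]
    exact ⟨hI.isIndepSet.mono (coe_subset.2 (filter_subset _ _)), hJ, fun u hu v hv _ =>
      ⟨hnot u hu v hv, fun h => hnot u hu v hv h.symm⟩⟩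
  have hmax := hI.maximum _ hindep
  rw [card_union_of_disjoint (disjoint_of_subset_left (filter_subset _ _) hIJ),
    ← card_filter_add_card_filter_not (s := I) fun u => ∃ v ∈ J, G.Adj u v] at hmax
  omega

theorem card_filter_neighborFinset_inter_eq_lt [Fintype V] [DecidableEq V] [DecidableRel G.Adj]
    {t : ℕ} {I T : Finset V} (hmax : G.IsMaximumIndepSet I) (hK : G.CliqueFree n) (hT : #T ≤ t) :
    #{v ∈ Iᶜ | G.neighborFinset v ∩ I = T} < n ^ (t + 1) := by
  set W := {v ∈ Iᶜ | G.neighborFinset v ∩ I = T}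
  have hWJ : (G.induce (W : Set V)).IndepSetFree (t + 1) := by
    rintro J ⟨hJ, hJt⟩
    have hmem : ∀ v ∈ J.map (.subtype _), v ∈ W := by
      simp +contextual
    have hind : G.IsIndepSet (J.map (.subtype _) : Finset V) := by
      simpa [IsIndepSet, Set.InjOn.pairwise_image Subtype.val_injective.injOn] using hJ
    have hle := card_le_card_filter_adj_of_isMaximumIndepSet hmax hind <|
      disjoint_right.2 fun v hv => mem_compl.1 (mem_filter.1 (hmem v hv)).1
    have hsub : {u ∈ I | ∃ v ∈ J.map (.subtype _), G.Adj u v} ⊆ T := by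
      intro u hu
      obtain ⟨huI, v, hv, huv⟩ := mem_filter.1 hu
      rw [← (mem_filter.1 (hmem v hv)).2, mem_inter, mem_neighborFinset]
      exact ⟨huv.symm, huI⟩
    rw [card_map, hJt] at hle
    have := card_le_card hsub
    omega
  have hWK : (G.induce (W : Set V)).CliqueFree n :=
    (G.cliqueFree_induce_iff _ _).2 hK.cliqueFreeOn
  have := card_lt_pow_of_cliqueFree_of_indepSetFree (G := (G.induce (W : Set V))ᶜ)
    ((G.induce _).cliqueFree_compl.2 hWJ) ((G.induce _).indepSetFree_compl.2 hWK)
  simpa using this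

theorem mul_card_filter_lt_card_neighborFinset_inter_le [Fintype V] [DecidableEq V]
    [DecidableRel G.Adj] (I : Finset V) (t : ℕ) :
    #{v | t < #(G.neighborFinset v ∩ I)} * (t + 1) ≤ #I * G.maxDegree := by
  refine card_mul_le_card_mul G.Adj (fun v hv => ?_) fun u _ => ?_
  · refine (mem_filter.1 hv).2.trans_le (card_le_card fun u hu => ?_)
    simpa [bipartiteAbove, and_comm] using hu
  · refine (card_le_card fun v hv => ?_).trans (G.degree_le_maxDegree u)
    rw [mem_neighborFinset]
    exact (mem_filter.1 hv).2.symm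

theorem card_lt_add_mul_maxDegree_div [Fintype V] [DecidableRel G.Adj] (hK : G.CliqueFree n)
    (hI : G.IndepSetFree n) (t : ℕ) :
    Fintype.card V < n + n ^ (2 * t + 1) + n * G.maxDegree / (t + 1) := by
  classical
  obtain ⟨I, hmax⟩ := G.maximumIndepSet_exists
  have hIn : #I < n := card_lt_of_isIndepSet hI hmax.isIndepSet
  set B : Finset V := {v | t < #(G.neighborFinset v ∩ I)}
  have hB : #B ≤ n * G.maxDegree / (t + 1) := by
    rw [Nat.le_div_iff_mul_le t.succ_pos]
    exact (mul_card_filter_lt_card_neighborFinset_inter_le I t).trans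
      (Nat.mul_le_mul_right _ hIn.le)
  set X := Iᶜ \ B
  have hX : #X ≤ n ^ (2 * t + 1) := by
    have hmaps : ∀ v ∈ X, G.neighborFinset v ∩ I ∈ {T ∈ I.powerset | #T ≤ t} := by
      intro v hv
      simpa [B] using (mem_sdiff.1 hv).2
    have hfiber : ∀ T ∈ {T ∈ I.powerset | #T ≤ t},
        #{v ∈ X | G.neighborFinset v ∩ I = T} ≤ n ^ (t + 1) := fun T hT =>
      (card_le_card (filter_subset_filter _ sdiff_subset)).trans
        (card_filter_neighborFinset_inter_eq_lt hmax hK (mem_filter.1 hT).2).le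
    calc #X ≤ n ^ (t + 1) * #{T ∈ I.powerset | #T ≤ t} :=
          card_le_mul_card_image_of_maps_to hmaps _ hfiber
      _ ≤ n ^ (t + 1) * n ^ t := Nat.mul_le_mul_left _ <|
          (card_powerset_filter_card_le I t).trans (Nat.pow_le_pow_left hIn t)
      _ = n ^ (2 * t + 1) := by rw [← pow_add]; congr 1; omega
  have hV : Fintype.card V ≤ #I + (#X + #B) := by
    rw [← card_add_card_compl I]
    exact Nat.add_le_add_left card_le_card_sdiff_add_card _
  omega

theorem card_le_two_mul_card_filter_degree_le [Fintype V] [DecidableRel G.Adj] {k : ℕ}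
    (hE : k * #G.edgeFinset ≤ (Fintype.card V).choose 2) :
    Fintype.card V ≤ 2 * #{v | k * G.degree v ≤ 2 * Fintype.card V} := by
  classical
  set N := Fintype.card V
  set B : Finset V := {v | ¬ k * G.degree v ≤ 2 * N}
  have hcard : #{v | k * G.degree v ≤ 2 * N} + #B = N := card_filter_add_card_filter_not _
  have hdeg : #B * (2 * N) ≤ N * N :=
    calc #B * (2 * N) ≤ ∑ v ∈ B, k * G.degree v :=
          card_nsmul_le_sum _ _ _ fun v hv => (not_le.1 (mem_filter.1 hv).2).le
      _ ≤ ∑ v, k * G.degree v := sum_le_sum_of_subset (subset_univ _)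
      _ = 2 * (k * #G.edgeFinset) := by
          rw [← mul_sum, sum_degrees_eq_twice_card_edges, mul_left_comm]
      _ ≤ 2 * N.choose 2 := Nat.mul_le_mul_left _ hE
      _ ≤ N * N := by
          rw [Nat.choose_two_right]
          exact (Nat.mul_div_le _ _).trans (Nat.mul_le_mul_left _ (Nat.sub_le _ _))
  rcases N.eq_zero_or_pos with h0 | h0
  · omega
  · have : #B * 2 ≤ N := Nat.le_of_mul_le_mul_right (by rwa [mul_assoc]) h0
    omega

theorem card_lt_of_mul_card_edgeFinset_le [Fintype V] [DecidableRel G.Adj] {k t : ℕ}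
    (hK : G.CliqueFree n) (hI : G.IndepSetFree n)
    (hE : k * #G.edgeFinset ≤ (Fintype.card V).choose 2) (ht : 8 * n ≤ k * (t + 1)) :
    Fintype.card V < 8 * n ^ (2 * t + 1) := by
  classical
  have hn : 0 < n := Nat.pos_of_ne_zero fun h => G.not_cliqueFree_zero (h ▸ hK)
  have hk : 0 < k := Nat.pos_of_ne_zero fun h => by
    rw [h, zero_mul] at ht
    omega
  set U : Finset V := {v | k * G.degree v ≤ 2 * Fintype.card V}
  have hVU : Fintype.card V ≤ 2 * #U := card_le_two_mul_card_filter_degree_le hE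
  set H := G.induce (U : Set V)
  have hΔ : k * H.maxDegree ≤ 4 * #U := by
    rw [mul_comm, ← Nat.le_div_iff_mul_le hk]
    refine H.maxDegree_le_of_forall_degree_le _ fun v => ?_
    rw [Nat.le_div_iff_mul_le hk, mul_comm]
    calc k * H.degree v ≤ k * G.degree v :=
          Nat.mul_le_mul_left _ ((Embedding.induce _).toCopy.degree_le v)
      _ ≤ 2 * Fintype.card V := (mem_filter.1 v.2).2
      _ ≤ 4 * #U := by omega
  have hquot : 2 * (n * H.maxDegree / (t + 1)) ≤ #U := by
    refine Nat.le_of_mul_le_mul_left ?_ (Nat.mul_pos hk t.succ_pos)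
    calc k * (t + 1) * (2 * (n * H.maxDegree / (t + 1)))
        = 2 * k * ((t + 1) * (n * H.maxDegree / (t + 1))) := by ring
      _ ≤ 2 * k * (n * H.maxDegree) := Nat.mul_le_mul_left _ (Nat.mul_div_le _ _)
      _ = 2 * n * (k * H.maxDegree) := by ring
      _ ≤ 2 * n * (4 * #U) := Nat.mul_le_mul_left _ hΔ
      _ = 8 * n * #U := by ring
      _ ≤ k * (t + 1) * #U := Nat.mul_le_mul_right _ ht
  have hU : #U < n + n ^ (2 * t + 1) + n * H.maxDegree / (t + 1) := by
    have := card_lt_add_mul_maxDegree_div (G := H)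
      ((G.cliqueFree_induce_iff _ _).2 hK.cliqueFreeOn) (indepSetFree_comap (.subtype _) hI) t
    simpa using this
  have hpow : n ≤ n ^ (2 * t + 1) := Nat.le_self_pow (by omega) n
  omega

theorem exists_card_mul_card_edgeFinset_le [Fintype V] {ι : Type*} {S : Finset ι}
    (hS : S.Nonempty) {G : ι → SimpleGraph V} [∀ i, DecidableRel (G i).Adj]
    (hG : (S : Set ι).PairwiseDisjoint G) :
    ∃ i ∈ S, #S * #(G i).edgeFinset ≤ (Fintype.card V).choose 2 := by
  classical
  obtain ⟨i, hi, hmin⟩ := exists_min_image S (fun i => #(G i).edgeFinset) hS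
  refine ⟨i, hi, ?_⟩
  calc #S * #(G i).edgeFinset ≤ ∑ j ∈ S, #(G j).edgeFinset := card_nsmul_le_sum _ _ _ hmin
    _ = #(S.biUnion fun j => (G j).edgeFinset) :=
        (card_biUnion fun a ha b hb hab => disjoint_edgeFinset.2 (hG ha hb hab)).symm
    _ ≤ #(⊤ : SimpleGraph V).edgeFinset :=
        card_le_card (biUnion_subset.2 fun j _ => edgeFinset_mono le_top)
    _ = (Fintype.card V).choose 2 := card_edgeFinset_top_eq_card_choose_two

theorem card_lt_of_pairwiseDisjoint_of_indepSetFree [Fintype V] {ι : Type*} {S : Finset ι}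
    (hS : 2 ≤ #S) {G : ι → SimpleGraph V} (hG : (S : Set ι).PairwiseDisjoint G)
    (hI : ∀ i ∈ S, (G i).IndepSetFree n) :
    Fintype.card V < 8 * n ^ (2 * (8 * n / #S) + 1) := by
  classical
  have hS0 : 0 < #S := by omega
  obtain ⟨i, hi, hE⟩ := exists_card_mul_card_edgeFinset_le (card_pos.1 hS0) hG
  obtain ⟨j, hj, hji⟩ := exists_mem_ne hS i
  exact card_lt_of_mul_card_edgeFinset_le
    (cliqueFree_of_disjoint (hG hi hj hji.symm) (hI j hj)) (hI i hi) hE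
    (Nat.lt_mul_div_succ (8 * n) hS0).le

end Graphs

section Grid

variable {α β : Type*} {G : SimpleGraph (α × β)} {n r : ℕ}

/-- The graph that `G` induces on row `y` of the grid, as a graph on the set of columns. -/
def rowGraph (G : SimpleGraph (α × β)) (y : β) : SimpleGraph α :=
  G.comap (.sectL α y : α ↪ α × β)

/-- The graph that `G` induces on column `x` of the grid, as a graph on the set of rows. -/
def columnGraph (G : SimpleGraph (α × β)) (x : α) : SimpleGraph β :=
  G.comap (.sectR x β : β ↪ α × β)

/-- No four sides of a rectangle are all edges of `G`. Nondegeneracy of the rectangle is automatic,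
since adjacent vertices are distinct. -/
def IsRectangleFree (G : SimpleGraph (α × β)) : Prop :=
  ∀ ⦃x x' y y'⦄, (rowGraph G y).Adj x x' → (rowGraph G y').Adj x x' →
    (columnGraph G x).Adj y y' → ¬ (columnGraph G x').Adj y y'

theorem pairwiseDisjoint_induce_rowGraph (hG : IsRectangleFree G) {C : Set α} {S : Set β}
    (hS : ∀ x ∈ C, (columnGraph G x).IsClique S) :
    S.PairwiseDisjoint fun y => (rowGraph G y).induce C := by
  intro y hy y' hy' hne
  refine SimpleGraph.disjoint_left.2 fun u v h h' => ?_
  exact hG h h' (hS u u.2 hy hy' hne) (hS v v.2 hy hy' hne)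

theorem card_le_choose_mul_of_isRectangleFree [Fintype α] [Fintype β] (hr : 2 ≤ r)
    (hG : IsRectangleFree G) (hcol : ∀ x, ¬ (columnGraph G x).CliqueFree r)
    (hrow : ∀ y, (rowGraph G y).IndepSetFree n) :
    Fintype.card α ≤ (Fintype.card β).choose r * (8 * n ^ (2 * (8 * n / r) + 1)) := by
  classical
  have hclique : ∀ x, ∃ S, (columnGraph G x).IsNClique r S := fun x => by
    simpa [CliqueFree] using hcol x
  choose S hS using hclique
  have hmaps : ∀ x ∈ univ, S x ∈ powersetCard r (univ : Finset β) := fun x _ =>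
    mem_powersetCard.2 ⟨subset_univ _, (hS x).card_eq⟩
  have hfiber : ∀ T ∈ powersetCard r (univ : Finset β),
      #{x | S x = T} ≤ 8 * n ^ (2 * (8 * n / r) + 1) := by
    intro T hT
    obtain ⟨-, rfl⟩ := mem_powersetCard.1 hT
    set C : Finset α := {x | S x = T}
    have hdisj := pairwiseDisjoint_induce_rowGraph (C := C) (S := T) hG fun x hx =>
      (mem_filter.1 hx).2 ▸ (hS x).isClique
    have hC := card_lt_of_pairwiseDisjoint_of_indepSetFree hr hdisj fun y _ =>
      indepSetFree_comap (.subtype _) (hrow y)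
    simpa using hC.le
  calc Fintype.card α
      ≤ 8 * n ^ (2 * (8 * n / r) + 1) * #(powersetCard r (univ : Finset β)) :=
        card_le_mul_card_image_of_maps_to hmaps _ hfiber
    _ = (Fintype.card β).choose r * (8 * n ^ (2 * (8 * n / r) + 1)) := by
        rw [card_powersetCard, card_univ, mul_comm]

end Grid

section Colorings

variable {V W : Type*} {M N n r : ℕ}

/-- The graph of red edges of an edge-coloring of the complete graph on `V` (red = `true`). -/
def redGraph (χ : Sym2 V → Bool) : SimpleGraph V :=
  .fromEdgeSet {e | χ e = true}

theorem redGraph_adj {χ : Sym2 V → Bool} {u v : V} :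
    (redGraph χ).Adj u v ↔ χ s(u, v) = true ∧ u ≠ v :=
  Iff.rfl

theorem redGraph_comp_map (χ : Sym2 W → Bool) (f : V ↪ W) :
    redGraph (χ ∘ Sym2.map f) = (redGraph χ).comap f := by
  ext u v
  simp [redGraph_adj]

theorem isIndepSet_redGraph_iff {χ : Sym2 V → Bool} {S : Set V} :
    (redGraph χ).IsIndepSet S ↔ ∀ a ∈ S, ∀ b ∈ S, a ≠ b → χ s(a, b) = false := by
  simp +contextual [IsIndepSet, Set.Pairwise, redGraph_adj]

theorem HasRedClique.not_cliqueFree_redGraph {χ : Sym2 (Fin M) → Bool} (h : HasRedClique M r χ) :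
    ¬ (redGraph χ).CliqueFree r := by
  obtain ⟨S, hS, hred⟩ := h
  exact fun hfree => hfree S ⟨fun a ha b hb hab => ⟨hred a ha b hb hab, hab⟩, hS⟩

theorem HasBlueClique.not_indepSetFree_redGraph {χ : Sym2 (Fin M) → Bool}
    (h : HasBlueClique M n χ) : ¬ (redGraph χ).IndepSetFree n := by
  obtain ⟨S, hS, hblue⟩ := h
  exact fun hfree => hfree S ⟨isIndepSet_redGraph_iff.2 hblue, hS⟩

variable {χ : Sym2 (Fin N × Fin M) → Bool}

theorem isRectangleFree_redGraph (h : ¬ HasRedRect N M χ) : IsRectangleFree (redGraph χ) :=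
  fun x x' y y' hy hy' hx hx' =>
    h ⟨x, x', y, y', hy.ne, hx.ne, hy.1, hy'.1, hx.1, hx'.1⟩

theorem indepSetFree_comap_redGraph (h : ¬ HasBlueGridClique N M n χ) (f : V ↪ Fin N × Fin M)
    (hf : ∀ a b, a ≠ b → GridAdj (f a) (f b)) : ((redGraph χ).comap f).IndepSetFree n := by
  rintro K ⟨hK, rfl⟩
  refine h ⟨K.map f, card_map f, ?_⟩
  rw [← redGraph_comp_map, isIndepSet_redGraph_iff] at hK
  simp only [mem_map, forall_exists_index, and_imp, forall_apply_eq_imp_iff₂]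
  intro a ha b hb hab
  have hne : a ≠ b := fun h => hab (congrArg f h)
  exact ⟨hf a b hne, hK a ha b hb hne⟩

theorem indepSetFree_rowGraph_redGraph (h : ¬ HasBlueGridClique N M n χ) (y : Fin M) :
    (rowGraph (redGraph χ) y).IndepSetFree n :=
  indepSetFree_comap_redGraph h _ fun _ _ hne => .inr ⟨hne, rfl⟩

theorem indepSetFree_columnGraph_redGraph (h : ¬ HasBlueGridClique N M n χ) (x : Fin N) :
    (columnGraph (redGraph χ) x).IndepSetFree n :=
  indepSetFree_comap_redGraph h _ fun _ _ hne => .inl ⟨rfl, hne⟩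

theorem not_cliqueFree_columnGraph_redGraph
    (hram : ∀ ψ : Sym2 (Fin M) → Bool, HasRedClique M r ψ ∨ HasBlueClique M n ψ)
    (h : ¬ HasBlueGridClique N M n χ) (x : Fin N) :
    ¬ (columnGraph (redGraph χ) x).CliqueFree r := by
  have hχ := hram (χ ∘ Sym2.map (.sectR x (Fin M) : Fin M ↪ Fin N × Fin M))
  rw [columnGraph, ← redGraph_comp_map]
  refine (hχ.resolve_right fun hblue => hblue.not_indepSetFree_redGraph ?_).not_cliqueFree_redGraph
  rw [redGraph_comp_map]
  exact indepSetFree_columnGraph_redGraph h x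

theorem le_choose_mul_of_not_hasRedRect (hr : 2 ≤ r)
    (hram : ∀ ψ : Sym2 (Fin M) → Bool, HasRedClique M r ψ ∨ HasBlueClique M n ψ)
    (hrect : ¬ HasRedRect N M χ) (hblue : ¬ HasBlueGridClique N M n χ) :
    N ≤ M.choose r * (8 * n ^ (2 * (8 * n / r) + 1)) := by
  simpa using card_le_choose_mul_of_isRectangleFree hr (isRectangleFree_redGraph hrect)
    (not_cliqueFree_columnGraph_redGraph hram hblue) (indepSetFree_rowGraph_redGraph hblue)

end Colorings

section Numerics

theorem two_rpow_mul_logb {x : ℝ} (hx : 0 < x) (a : ℝ) :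
    (2 : ℝ) ^ (a * Real.logb 2 x) = x ^ a := by
  rw [mul_comm, Real.rpow_mul zero_le_two, Real.rpow_logb zero_lt_two (by norm_num) hx]

theorem ceil_sq_add_div_ceil_le {n : ℕ} {x : ℝ} (hx : 1 ≤ x) (hn : (n : ℝ) = x ^ 3) :
    ((⌈x⌉₊ * ⌈x⌉₊ + 4 + (2 * (8 * n / ⌈x⌉₊) + 1) : ℕ) : ℝ) ≤ 25 * x ^ 2 := by
  have hceil : (⌈x⌉₊ : ℝ) < x + 1 := Nat.ceil_lt_add_one (by linarith)
  have hdiv : ((8 * n / ⌈x⌉₊ : ℕ) : ℝ) ≤ 8 * x ^ 2 :=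
    calc ((8 * n / ⌈x⌉₊ : ℕ) : ℝ) ≤ (8 * n : ℕ) / (⌈x⌉₊ : ℝ) := Nat.cast_div_le
      _ ≤ (8 * n : ℕ) / x := by gcongr; exact Nat.le_ceil x
      _ = 8 * x ^ 2 := by push_cast; rw [hn]; field_simp
  calc ((⌈x⌉₊ * ⌈x⌉₊ + 4 + (2 * (8 * n / ⌈x⌉₊) + 1) : ℕ) : ℝ)
      ≤ (x + 1) * (x + 1) + 4 + (2 * (8 * x ^ 2) + 1) := by
        push_cast
        gcongr
    _ ≤ 25 * x ^ 2 := by nlinarith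

theorem pow_mul_eight_mul_pow_lt_two_rpow {n r : ℕ} (hn : 2 ≤ n)
    (hr : r = ⌈(n : ℝ) ^ ((1 : ℝ) / 3)⌉₊) :
    (((n ^ r) ^ r * (8 * n ^ (2 * (8 * n / r) + 1)) : ℕ) : ℝ) <
      2 ^ (25 * (n : ℝ) ^ ((2 : ℝ) / 3) * Real.logb 2 n) := by
  have hn1 : (1 : ℝ) ≤ n := by exact_mod_cast (by omega : 1 ≤ n)
  have hcube : (n : ℝ) = ((n : ℝ) ^ ((1 : ℝ) / 3)) ^ 3 := by
    rw [← Real.rpow_mul_natCast n.cast_nonneg]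
    norm_num
  have hsq : (n : ℝ) ^ ((2 : ℝ) / 3) = ((n : ℝ) ^ ((1 : ℝ) / 3)) ^ 2 := by
    rw [← Real.rpow_mul_natCast n.cast_nonneg]
    norm_num
  set t := 8 * n / r with ht
  have hexp : ((r * r + 4 + (2 * t + 1) : ℕ) : ℝ) ≤ 25 * (n : ℝ) ^ ((2 : ℝ) / 3) := by
    rw [ht, hr, hsq]
    exact ceil_sq_add_div_ceil_le (Real.one_le_rpow hn1 (by norm_num)) hcube
  have hpow : (n ^ r) ^ r * (8 * n ^ (2 * t + 1)) < n ^ (r * r + 4 + (2 * t + 1)) :=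
    calc (n ^ r) ^ r * (8 * n ^ (2 * t + 1))
        < (n ^ r) ^ r * (n ^ 4 * n ^ (2 * t + 1)) := by
          have h8 : 8 < n ^ 4 := (by norm_num : 8 < 2 ^ 4).trans_le (Nat.pow_le_pow_left hn 4)
          gcongr
      _ = n ^ (r * r + 4 + (2 * t + 1)) := by ring
  rw [two_rpow_mul_logb (by linarith)]
  calc (((n ^ r) ^ r * (8 * n ^ (2 * t + 1)) : ℕ) : ℝ)
      < ((n ^ (r * r + 4 + (2 * t + 1)) : ℕ) : ℝ) := by exact_mod_cast hpow
    _ = (n : ℝ) ^ ((r * r + 4 + (2 * t + 1) : ℕ) : ℝ) := by rw [Nat.cast_pow, Real.rpow_natCast]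
    _ ≤ (n : ℝ) ^ (25 * (n : ℝ) ^ ((2 : ℝ) / 3)) := Real.rpow_le_rpow_of_exponent_le hn1 hexp

end Numerics

/-- There is `c' > 0` such that for all `n ≥ 2`, with `r = ⌈n^(1/3)⌉` and `M` a positive
integer such that every red/blue edge-coloring of `K_M` contains a red `K_r` or a blue
`K_n`, and `M ≤ n^r`: for every `N ≥ 2^(c' n^(2/3) log₂ n)`, every red/blue
edge-coloring of `Γ_{N,M}` contains a red rectangle or a blue `K_n`. -/
theorem rectangular_grid_upper_bound :
    ∃ c' : ℝ, 0 < c' ∧ ∀ n : ℕ, 2 ≤ n →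
      ∀ M : ℕ, 0 < M →
        (∀ χ : Sym2 (Fin M) → Bool,
          HasRedClique M ⌈(n : ℝ) ^ ((1 : ℝ) / 3)⌉₊ χ ∨ HasBlueClique M n χ) →
        M ≤ n ^ ⌈(n : ℝ) ^ ((1 : ℝ) / 3)⌉₊ →
        ∀ N : ℕ, (2 : ℝ) ^ (c' * (n : ℝ) ^ ((2 : ℝ) / 3) * Real.logb 2 n) ≤ N →
          ∀ χ : Sym2 (Fin N × Fin M) → Bool,
            HasRedRect N M χ ∨ HasBlueGridClique N M n χ := by
  refine ⟨25, by norm_num, fun n hn M _ hram hM N hN χ => ?_⟩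
  set r := ⌈(n : ℝ) ^ ((1 : ℝ) / 3)⌉₊ with hr_def
  by_contra! hχ
  have hr : 2 ≤ r := Nat.lt_ceil.2 <| by
    simpa using Real.one_lt_rpow (by exact_mod_cast hn : (1 : ℝ) < n) (by norm_num)
  have hNle : N ≤ (n ^ r) ^ r * (8 * n ^ (2 * (8 * n / r) + 1)) :=
    calc N ≤ M.choose r * (8 * n ^ (2 * (8 * n / r) + 1)) :=
          le_choose_mul_of_not_hasRedRect hr hram hχ.1 hχ.2
      _ ≤ (n ^ r) ^ r * (8 * n ^ (2 * (8 * n / r) + 1)) :=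
          Nat.mul_le_mul_right _ <| (M.choose_le_pow r).trans (Nat.pow_le_pow_left hM r)
  exact ((pow_mul_eight_mul_pow_lt_two_rpow hn hr_def).trans_le hN).not_ge (by exact_mod_cast hNle)
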